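/- arXiv:1808.02762 — 2 statements merged into one kernel-verified Lean document; each statement's English description precedes it below -/
import Mathlib

section
/- Let 1 < q < 2 < p and V0 > 0. Then there exists Λ0 > 0 with the following three properties. (1) For each λ ∈ (0, Λ0) there exist real numbers 0 < r₁ < r₂ such that for every r > 0: r ∈ [r₁, r₂] if and only if r^{p−1} + λ r^{q−1} ≤ V0·r. (2) For λ = Λ0 there exists exactly one r > 0 such that r^{p−1} + Λ0·r^{q−1} = V0·r. (3) For every λ > Λ0 there is no r > 0 such that r^{p−1} + λ r^{q−1} = V0·r. -/
theorem aux_concave (h : ℝ → ℝ) (hc : StrictConcaveOn ℝ (Set.Ici 0) h)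
    (hcont : ContinuousOn h (Set.Ici 0)) (h0 : h 0 = 0) (S : ℝ) (hS : 0 < S) (hhS : h S = 0) :
    ∃ m : ℝ, 0 < m ∧ 0 < h m ∧ (∀ s, 0 ≤ s → s ≠ m → h s < h m) ∧
      ∀ lam, 0 < lam → lam < h m → ∃ s₁ s₂ : ℝ, 0 < s₁ ∧ s₁ < s₂ ∧
        ∀ s, 0 < s → (s ∈ Set.Icc s₁ s₂ ↔ lam ≤ h s) := by
  -- values strictly between are above the minimum
  have key : ∀ a b c : ℝ, 0 ≤ a → a < b → b < c → min (h a) (h c) < h b := by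
    intro a b c ha hab hbc
    refine hc.lt_on_openSegment (Set.mem_Ici.2 ha) (Set.mem_Ici.2 (by linarith)) (by linarith) ?_
    rw [openSegment_eq_Ioo (by linarith)]
    exact ⟨hab, hbc⟩
  have hhalf : 0 < h (S / 2) := by
    have := key 0 (S / 2) S le_rfl (by linarith) (by linarith)
    simpa [h0, hhS] using this
  obtain ⟨m, hm, hmax⟩ := (isCompact_Icc (a := (0 : ℝ)) (b := S)).exists_isMaxOn
    ⟨0, by simp [hS.le]⟩ (hcont.mono Set.Icc_subset_Ici_self)
  have hMpos : 0 < h m := lt_of_lt_of_le hhalf (hmax ⟨by linarith, by linarith⟩)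
  have hm0 : 0 < m := by
    rcases hm.1.eq_or_lt with e | e
    · rw [← e, h0] at hMpos; exact absurd hMpos (lt_irrefl _)
    · exact e
  have hmS : m < S := by
    rcases hm.2.eq_or_lt with e | e
    · rw [e, hhS] at hMpos; exact absurd hMpos (lt_irrefl _)
    · exact e
  have hle : ∀ s, 0 ≤ s → h s ≤ h m := by
    intro s hs
    rcases le_or_gt s S with h1 | h1
    · exact hmax ⟨hs, h1⟩
    · have := key m S s hm0.le hmS h1
      rw [hhS, min_lt_iff] at this
      rcases this with h2 | h2 <;> linarith
  refine ⟨m, hm0, hMpos, ?_, ?_⟩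
  · intro s hs hne
    by_contra hcon
    push Not at hcon
    rcases lt_or_gt_of_ne hne with h1 | h1
    · have h2 := key s ((s + m) / 2) m hs (by linarith) (by linarith)
      rw [min_eq_right hcon] at h2
      exact absurd (hle ((s + m) / 2) (by linarith)) (not_le.2 h2)
    · have h2 := key m ((s + m) / 2) s hm0.le (by linarith) (by linarith)
      rw [min_eq_left hcon] at h2
      exact absurd (hle ((s + m) / 2) (by linarith)) (not_le.2 h2)
  · intro lam hl hlm
    obtain ⟨s₁, hs₁, e₁⟩ := intermediate_value_Ioo hm0.le
      (hcont.mono (Set.Icc_subset_Ici_self)) (show lam ∈ Set.Ioo (h 0) (h m) from ⟨by rw [h0]; exact hl, hlm⟩)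
    obtain ⟨s₂, hs₂, e₂⟩ := intermediate_value_Ioo' hmS.le
      (hcont.mono (fun x hx => Set.mem_Ici.2 (hm0.le.trans hx.1)))
      (show lam ∈ Set.Ioo (h S) (h m) from ⟨by rw [hhS]; exact hl, hlm⟩)
    refine ⟨s₁, s₂, hs₁.1, hs₁.2.trans hs₂.1, fun s hs => ⟨?_, ?_⟩⟩
    · rintro ⟨h1, h2⟩
      rcases h1.eq_or_lt with h1 | h1
      · rw [← h1, e₁]
      rcases h2.eq_or_lt with h2 | h2
      · rw [h2, e₂]
      have := key s₁ s s₂ hs₁.1.le h1 h2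
      rw [e₁, e₂, min_self] at this
      exact this.le
    · intro hls
      refine ⟨?_, ?_⟩
      · by_contra hcon
        push Not at hcon
        have := key s s₁ m hs.le hcon hs₁.2
        rw [e₁, min_lt_iff] at this
        rcases this with h2 | h2 <;> linarith
      · by_contra hcon
        push Not at hcon
        have := key m s₂ s hm0.le hs₂.1 hcon
        rw [e₂, min_lt_iff] at this
        rcases this with h2 | h2 <;> linarith

/-- Lemma 4.1: behaviour of the inequality `r^(p−1) + λ r^(q−1) ≤ V0 r` for
`1 < q < 2 < p` and `V0 > 0`, as `λ > 0` varies around a threshold `Λ0`. -/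
theorem statement4 (p q V0 : ℝ) (hq1 : 1 < q) (hq2 : q < 2) (hp : 2 < p) (hV0 : 0 < V0) :
    ∃ Λ0 : ℝ, 0 < Λ0 ∧
      (∀ lam : ℝ, 0 < lam → lam < Λ0 →
        ∃ r₁ r₂ : ℝ, 0 < r₁ ∧ r₁ < r₂ ∧
          ∀ r : ℝ, 0 < r →
            (r ∈ Set.Icc r₁ r₂ ↔ r ^ (p - 1) + lam * r ^ (q - 1) ≤ V0 * r)) ∧
      (∃! r : ℝ, 0 < r ∧ r ^ (p - 1) + Λ0 * r ^ (q - 1) = V0 * r) ∧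
      (∀ lam : ℝ, Λ0 < lam →
        ¬ ∃ r : ℝ, 0 < r ∧ r ^ (p - 1) + lam * r ^ (q - 1) = V0 * r) := by
  have ha : 0 < 2 - q := by linarith
  set k : ℝ := (p - q) / (2 - q) with hk
  have hk1 : 1 < k := by rw [hk, lt_div_iff₀ ha]; linarith
  have hak : (2 - q) * k = p - q := by rw [hk]; field_simp
  set h : ℝ → ℝ := fun s => V0 * s - s ^ k with hh
  have hc : StrictConcaveOn ℝ (Set.Ici 0) h := by
    have h1 : StrictConcaveOn ℝ (Set.Ici 0) (-(fun x : ℝ => x ^ k)) := (strictConvexOn_rpow hk1).neg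
    have h2 : ConcaveOn ℝ (Set.Ici 0) (fun s : ℝ => V0 * s) :=
      (concaveOn_id (convex_Ici 0)).smul hV0.le
    have h3 := h2.add_strictConcaveOn h1
    have e : h = (fun s : ℝ => V0 * s) + (-(fun x : ℝ => x ^ k)) := by
      funext s; simp [hh, sub_eq_add_neg]
    rw [e]; exact h3
  have hcont : ContinuousOn h (Set.Ici 0) :=
    ((continuous_const.mul continuous_id).sub
      (Real.continuous_rpow_const (by linarith))).continuousOn
  have hS : 0 < V0 ^ (1 / (k - 1)) := Real.rpow_pos_of_pos hV0 _
  have hhS : h (V0 ^ (1 / (k - 1))) = 0 := by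
    have e : (V0 ^ (1 / (k - 1))) ^ k = V0 * V0 ^ (1 / (k - 1)) := by
      rw [← Real.rpow_mul hV0.le, ← Real.rpow_one_add' hV0.le]
      · congr 1
        have : k - 1 ≠ 0 := by linarith
        field_simp
        ring
      · have : 0 < 1 / (k - 1) := by apply div_pos <;> linarith
        linarith
    simp only [hh, e, sub_self]
  have h0 : h 0 = 0 := by simp [hh, Real.zero_rpow (by linarith : k ≠ 0)]
  obtain ⟨m, hm, hM, hmax, hint⟩ := aux_concave h hc hcont h0 _ hS hhS
  have hfac : ∀ r : ℝ, 0 < r → ∀ lam, V0 * r - (r ^ (p - 1) + lam * r ^ (q - 1)) =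
      r ^ (q - 1) * (h (r ^ (2 - q)) - lam) := by
    intro r hr lam
    have e1 : r ^ (q - 1) * r ^ (2 - q) = r := by
      rw [← Real.rpow_add hr]; ring_nf; exact Real.rpow_one r
    have e2 : r ^ (q - 1) * (r ^ (2 - q)) ^ k = r ^ (p - 1) := by
      rw [← Real.rpow_mul hr.le, hak, ← Real.rpow_add hr]; ring_nf
    simp only [hh]
    linear_combination (-V0) * e1 + e2
  have hiff : ∀ r : ℝ, 0 < r → ∀ lam,
      (r ^ (p - 1) + lam * r ^ (q - 1) ≤ V0 * r ↔ lam ≤ h (r ^ (2 - q))) := by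
    intro r hr lam
    rw [← sub_nonneg, hfac r hr, mul_nonneg_iff_of_pos_left (Real.rpow_pos_of_pos hr _), sub_nonneg]
  have heq : ∀ r : ℝ, 0 < r → ∀ lam,
      (r ^ (p - 1) + lam * r ^ (q - 1) = V0 * r ↔ h (r ^ (2 - q)) = lam) := by
    intro r hr lam
    rw [eq_comm, ← sub_eq_zero, hfac r hr, mul_eq_zero,
      or_iff_right (Real.rpow_pos_of_pos hr _).ne', sub_eq_zero]
  have hinv : ∀ s : ℝ, 0 < s → (s ^ (2 - q)⁻¹) ^ (2 - q) = s := fun s hs =>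
    Real.rpow_inv_rpow hs.le ha.ne'
  refine ⟨h m, hM, ?_, ?_, ?_⟩
  · intro lam hl hlm
    obtain ⟨s₁, s₂, h1, h12, hs⟩ := hint lam hl hlm
    have h2 := h1.trans h12
    refine ⟨s₁ ^ (2 - q)⁻¹, s₂ ^ (2 - q)⁻¹, Real.rpow_pos_of_pos h1 _,
      Real.rpow_lt_rpow h1.le h12 (inv_pos.2 ha), fun r hr => ?_⟩
    rw [hiff r hr, ← hs _ (Real.rpow_pos_of_pos hr _), Set.mem_Icc, Set.mem_Icc,
      ← Real.rpow_le_rpow_iff (Real.rpow_pos_of_pos h1 _).le hr.le ha,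
      ← Real.rpow_le_rpow_iff hr.le (Real.rpow_pos_of_pos h2 _).le ha, hinv _ h1, hinv _ h2]
  · have hpos := Real.rpow_pos_of_pos hm (2 - q)⁻¹
    refine ⟨m ^ (2 - q)⁻¹, ⟨hpos, ?_⟩, ?_⟩
    · rw [heq _ hpos, hinv _ hm]
    · rintro r ⟨hr, he⟩
      rw [heq r hr] at he
      have : r ^ (2 - q) = m := by
        by_contra hne
        exact (hmax _ (Real.rpow_pos_of_pos hr _).le hne).ne he
      rw [← this, Real.rpow_rpow_inv hr.le ha.ne']
  · rintro lam hl ⟨r, hr, he⟩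
    rw [heq r hr] at he
    by_cases hne : r ^ (2 - q) = m
    · rw [hne] at he; linarith
    · have := hmax _ (Real.rpow_pos_of_pos hr _).le hne
      linarith
end

section
/- Let V : ℝ^N → ℝ be measurable with V(x) > 0 for a.e. x and with x ↦ 1/V(x) Lebesgue integrable on ℝ^N. Let u₀ and u_n (n ∈ ℕ) be measurable functions ℝ^N → ℝ such that sup_n ∫ V(x)(u_n(x) − u₀(x))² dx < ∞ and, for every R > 0, ∫_{|x| ≤ R} |u_n(x) − u₀(x)| dx → 0 as n → ∞. Then ∫_{ℝ^N} |u_n(x) − u₀(x)| dx → 0 as n → ∞. -/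
open MeasureTheory Filter Topology

/-- The tail-cutting argument from the proof of Lemma 3.1: uniform boundedness of
`∫ V (u_n − u₀)²` together with integrability of `1/V` upgrades local
L¹-convergence to global L¹-convergence. -/
theorem statement12 (N : ℕ) (V : EuclideanSpace ℝ (Fin N) → ℝ)
    (u₀ : EuclideanSpace ℝ (Fin N) → ℝ)
    (u : ℕ → EuclideanSpace ℝ (Fin N) → ℝ)
    (hV : AEMeasurable V volume) (hVpos : ∀ᵐ x ∂volume, 0 < V x)
    (hVinv : Integrable (fun x => 1 / V x) volume)
    (hu : ∀ n, AEMeasurable (u n) volume) (hu₀ : AEMeasurable u₀ volume)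
    (C : ℝ)
    (hbound : ∀ n, Integrable (fun x => V x * (u n x - u₀ x) ^ 2) volume ∧
      ∫ x, V x * (u n x - u₀ x) ^ 2 ≤ C)
    (hloc : ∀ R : ℝ, 0 < R →
      Tendsto (fun n => ∫ x in {y : EuclideanSpace ℝ (Fin N) | ‖y‖ ≤ R},
        |u n x - u₀ x|) atTop (𝓝 0)) :
    (∀ n, Integrable (fun x => u n x - u₀ x) volume) ∧
      Tendsto (fun n => ∫ x, |u n x - u₀ x|) atTop (𝓝 0) := by
  have key : ∀ δ : ℝ, 0 < δ → ∀ n, ∀ᵐ x ∂(volume : Measure (EuclideanSpace ℝ (Fin N))),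
      |u n x - u₀ x| ≤ δ * (V x * (u n x - u₀ x) ^ 2) + δ⁻¹ * (1 / V x) := by
    intro δ hδ n
    filter_upwards [hVpos] with x hx
    generalize u n x - u₀ x = w
    have hc : 0 < δ * V x := mul_pos hδ hx
    have e : δ⁻¹ * (1 / V x) = (δ * V x)⁻¹ := by
      rw [mul_inv, one_div]
    rw [e, ← mul_assoc]
    generalize δ * V x = c at hc
    rw [← sq_abs w]
    have h0 := abs_nonneg w
    generalize |w| = a at h0
    have h1 : c * a ^ 2 + c⁻¹ - 2 * a = c⁻¹ * (c * a - 1) ^ 2 := by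
      field_simp
      ring
    have h2 : 0 ≤ c⁻¹ * (c * a - 1) ^ 2 := by positivity
    linarith
  have hint : ∀ n, Integrable (fun x => u n x - u₀ x) volume := by
    intro n
    refine Integrable.mono' (((hbound n).1.const_mul 1).add (hVinv.const_mul (1:ℝ)⁻¹))
      ((hu n).sub hu₀).aestronglyMeasurable ?_
    filter_upwards [key 1 one_pos n] with x hx
    simpa using hx
  refine ⟨hint, ?_⟩
  have hm : ∀ R : ℝ, MeasurableSet {y : EuclideanSpace ℝ (Fin N) | ‖y‖ ≤ R} := fun R =>
    measurableSet_le measurable_norm measurable_const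
  have htail : Tendsto (fun k : ℕ => ∫ x in {y : EuclideanSpace ℝ (Fin N) | ‖y‖ ≤ (k : ℝ)}ᶜ,
      1 / V x) atTop (𝓝 0) := by
    have h := tendsto_setIntegral_of_antitone (μ := volume) (f := fun x => 1 / V x)
      (s := fun k : ℕ => {y : EuclideanSpace ℝ (Fin N) | ‖y‖ ≤ (k : ℝ)}ᶜ)
      (fun k => (hm k).compl) (by
        intro a b hab x hx
        simp only [Set.mem_compl_iff, Set.mem_setOf_eq, not_le] at hx ⊢
        exact lt_of_le_of_lt (by exact_mod_cast hab) hx) ⟨0, hVinv.integrableOn⟩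
    have he : (⋂ k : ℕ, {y : EuclideanSpace ℝ (Fin N) | ‖y‖ ≤ (k : ℝ)}ᶜ) = ∅ := by
      ext x
      simp only [Set.mem_iInter, Set.mem_compl_iff, Set.mem_setOf_eq, Set.mem_empty_iff_false,
        iff_false, not_forall, not_not]
      exact exists_nat_ge ‖x‖
    rw [he] at h
    simpa using h
  rw [Metric.tendsto_atTop]
  intro ε hε
  obtain ⟨δ, hδ, hδC⟩ : ∃ δ : ℝ, 0 < δ ∧ δ * C < ε / 3 := by
    refine ⟨ε / 3 / (|C| + 1), by positivity, ?_⟩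
    rw [div_mul_eq_mul_div, div_lt_iff₀ (by positivity)]
    have := le_abs_self C
    have : C < |C| + 1 := by linarith
    exact mul_lt_mul_of_pos_left this (by positivity)
  obtain ⟨k, hk, hk1⟩ := ((htail.eventually (gt_mem_nhds (show 0 < δ * (ε / 3) by positivity))).and
    (eventually_ge_atTop 1)).exists
  have hkpos : (0 : ℝ) < k := by exact_mod_cast hk1
  obtain ⟨M, hM⟩ := eventually_atTop.1 ((hloc k hkpos).eventually
    (gt_mem_nhds (show 0 < ε / 3 by positivity)))
  refine ⟨M, fun n hn => ?_⟩
  have h1 := hM n hn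
  set S := {y : EuclideanSpace ℝ (Fin N) | ‖y‖ ≤ (k : ℝ)} with hS
  have hb := (hbound n).1
  have h2 : ∫ x in Sᶜ, |u n x - u₀ x| ≤
      ∫ x in Sᶜ, (δ * (V x * (u n x - u₀ x) ^ 2) + δ⁻¹ * (1 / V x)) :=
    setIntegral_mono_ae (hint n).abs.integrableOn
      ((hb.const_mul δ).add (hVinv.const_mul δ⁻¹)).integrableOn (key δ hδ n)
  rw [integral_add (hb.const_mul δ).integrableOn (hVinv.const_mul δ⁻¹).integrableOn,
    integral_const_mul, integral_const_mul] at h2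
  have h3 : ∫ x in Sᶜ, V x * (u n x - u₀ x) ^ 2 ≤ ∫ x, V x * (u n x - u₀ x) ^ 2 := by
    refine setIntegral_le_integral hb ?_
    filter_upwards [hVpos] with x hx
    exact mul_nonneg hx.le (sq_nonneg _)
  have h4 : δ * ∫ x in Sᶜ, V x * (u n x - u₀ x) ^ 2 ≤ δ * C :=
    mul_le_mul_of_nonneg_left (h3.trans (hbound n).2) hδ.le
  have h5 : δ⁻¹ * ∫ x in Sᶜ, 1 / V x < ε / 3 := by
    rw [inv_mul_lt_iff₀ hδ]
    exact hk
  have h6 := integral_add_compl (hm k) (hint n).abs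
  have h7 : 0 ≤ ∫ x, |u n x - u₀ x| := integral_nonneg fun x => abs_nonneg _
  rw [Real.dist_eq, sub_zero, abs_of_nonneg h7, ← h6]
  linarith
end
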